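/- The Horn, Krom, double Horn, renamable Horn and q-Horn fragments of propositional logic have the uniform interpolation property: for every theory α in the fragment and every set V of atoms, there exists a formula γ in (or expressible in) the same fragment with Var(γ) ⊆ Var(α) \ V such that for every formula β with Var(β) ∩ V = ∅, α ⊨ β if and only if γ ⊨ β. -/

import Mathlib

variable {α : Type*} [Fintype α] [DecidableEq α]

/-- A clause (or term): a finite set of literals, where a literal is an atom
paired with a polarity (`true` = positive occurrence, `false` = negated). -/
abbrev Clause (α : Type*) := Finset (α × Bool)

/-- A finite set of literals is a legal clause/term if it contains no
complementary pair of literals. -/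
def IsClause (c : Clause α) : Prop := ∀ p : α, ¬((p, true) ∈ c ∧ (p, false) ∈ c)

instance : DecidablePred (IsClause (α := α)) := fun c =>
  decidable_of_iff (∀ p : α, ¬((p, true) ∈ c ∧ (p, false) ∈ c)) Iff.rfl

/-- The atoms occurring in a clause/term. -/
def varsC (c : Clause α) : Finset α := c.image Prod.fst

/-- The atoms occurring positively in a clause/term. -/
def posC (c : Clause α) : Finset α := (c.filter fun l => l.2 = true).image Prod.fst

/-- The atoms occurring negatively in a clause/term. -/
def negC (c : Clause α) : Finset α := (c.filter fun l => l.2 = false).image Prod.fst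

/-- The resolvent of two clauses on atom `p`. -/
def res (c c' : Clause α) (p : α) : Clause α :=
  (c ∪ c') \ ({(p, true), (p, false)} : Finset (α × Bool))

/-- `c` and `c'` are resolvable on atom `p`: `p` occurs in one of them and `¬p` in
the other, and the resolvent contains no complementary pair of literals. -/
def ResolvableOn (c c' : Clause α) (p : α) : Prop :=
  ((p, true) ∈ c ∧ (p, false) ∈ c' ∨ (p, false) ∈ c ∧ (p, true) ∈ c') ∧ IsClause (res c c' p)

/-- Renaming of a literal: flip the polarity of atoms in `V`. -/
def renLit (V : Finset α) (l : α × Bool) : α × Bool := if l.1 ∈ V then (l.1, !l.2) else l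

/-- Renaming of a clause w.r.t. the atoms in `V`. -/
def renClause (V : Finset α) (c : Clause α) : Clause α := c.image (renLit V)

/-- Renaming of a CNF theory w.r.t. the atoms in `V`. -/
def renTheory (V : Finset α) (T : Finset (Clause α)) : Finset (Clause α) := T.image (renClause V)

/-- A Horn clause: at most one positive literal. -/
def HornClause (c : Clause α) : Prop := (posC c).card ≤ 1

/-- A Horn theory: a finite set of Horn clauses. -/
def IsHornTheory (T : Finset (Clause α)) : Prop := ∀ c ∈ T, HornClause c

/-- A Krom theory: each clause contains at most 2 literals. -/
def IsKromTheory (T : Finset (Clause α)) : Prop := ∀ c ∈ T, c.card ≤ 2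

/-- `T` is Horn renamable: some renaming of `T` is a Horn theory. -/
def IsRenHorn (T : Finset (Clause α)) : Prop := ∃ V : Finset α, IsHornTheory (renTheory V T)

/-- The QH-conditions for sets of atoms `Q`, `H` and a clause `c`. -/
def QHcond (Q H : Finset α) (c : Clause α) : Prop :=
  (varsC c ∩ Q).card ≤ 2 ∧ (posC c ∩ H).card ≤ 1 ∧
    ((posC c ∩ H).card = 1 → varsC c ∩ Q = ∅)

/-- The atoms occurring in a CNF theory. -/
def varsT (T : Finset (Clause α)) : Finset α := T.sup varsC

/-- `T` has a QH-partition: a partition `{Q, H}` of its atoms satisfying the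
QH-conditions for each of its clauses. -/
def HasQHPartition (T : Finset (Clause α)) : Prop :=
  ∃ Q H : Finset α, Q ∩ H = ∅ ∧ Q ∪ H = varsT T ∧ ∀ c ∈ T, QHcond Q H c

/-- `T` is q-Horn: some renaming of `T` has a QH-partition. -/
def IsQHorn (T : Finset (Clause α)) : Prop := ∃ V : Finset α, HasQHPartition (renTheory V T)

/-- Satisfaction of a literal by an interpretation (a set of atoms). -/
def litSat (I : Set α) (l : α × Bool) : Prop := if l.2 then l.1 ∈ I else l.1 ∉ I

/-- Satisfaction of a clause (read disjunctively). -/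
def clauseSat (I : Set α) (c : Clause α) : Prop := ∃ l ∈ c, litSat I l

/-- Satisfaction of a term (read conjunctively). -/
def termSat (I : Set α) (t : Clause α) : Prop := ∀ l ∈ t, litSat I l

/-- Satisfaction of a CNF theory. -/
def cnfSat (I : Set α) (T : Finset (Clause α)) : Prop := ∀ c ∈ T, clauseSat I c

/-- One step of the resolution closure. -/
def resStep (S : Set (Clause α)) : Set (Clause α) :=
  S ∪ {d | ∃ c ∈ S, ∃ c' ∈ S, ∃ p : α, ResolvableOn c c' p ∧ d = res c c' p}

/-- The iterated resolution closure `res^n_T`. -/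
def resIter (T : Finset (Clause α)) : ℕ → Set (Clause α)
  | 0 => (↑T : Set (Clause α))
  | n + 1 => resStep (resIter T n)

/-- Propositional formulas over atoms `α`. -/
inductive PropForm (α : Type*) where
  | var : α → PropForm α
  | tru : PropForm α
  | fls : PropForm α
  | neg : PropForm α → PropForm α
  | conj : PropForm α → PropForm α → PropForm α
  | disj : PropForm α → PropForm α → PropForm α

namespace PropForm

/-- Satisfaction of a formula by an interpretation. -/
def Sat (I : Set α) : PropForm α → Prop
  | var p => p ∈ I
  | tru => True
  | fls => False
  | neg φ => ¬ Sat I φ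
  | conj φ ψ => Sat I φ ∧ Sat I ψ
  | disj φ ψ => Sat I φ ∨ Sat I ψ

/-- Logical equivalence: same models. -/
def equivalent (φ ψ : PropForm α) : Prop := ∀ I : Set α, Sat I φ ↔ Sat I ψ

/-- Entailment: every model of `φ` is a model of `ψ`. -/
def entails (φ ψ : PropForm α) : Prop := ∀ I : Set α, Sat I φ → Sat I ψ

/-- The atoms occurring in a formula. -/
def vars : PropForm α → Finset α
  | var p => {p}
  | tru => ∅
  | fls => ∅
  | neg φ => vars φ
  | conj φ ψ => vars φ ∪ vars ψ
  | disj φ ψ => vars φ ∪ vars ψ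

/-- Substitution of the formula `χ` for the atom `p`. -/
def subst (p : α) (χ : PropForm α) : PropForm α → PropForm α
  | var q => if q = p then χ else var q
  | tru => tru
  | fls => fls
  | neg φ => neg (subst p χ φ)
  | conj φ ψ => conj (subst p χ φ) (subst p χ ψ)
  | disj φ ψ => disj (subst p χ φ) (subst p χ ψ)

/-- Forgetting a single atom: `Forget(φ, {p}) = φ[p/⊤] ∨ φ[p/⊥]`. -/
def forget1 (φ : PropForm α) (p : α) : PropForm α := disj (subst p tru φ) (subst p fls φ)

/-- Forgetting a set of atoms (presented as a list), one atom at a time: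
`Forget(φ, ∅) = φ` and `Forget(φ, V ∪ {p}) = Forget(Forget(φ, {p}), V)`. -/
def Forget : PropForm α → List α → PropForm α
  | φ, [] => φ
  | φ, p :: V => Forget (forget1 φ p) V

/-- Renaming of a formula: replace each occurrence of an atom `p ∈ V` by `¬p`. -/
def renForm (V : Finset α) : PropForm α → PropForm α
  | var p => if p ∈ V then neg (var p) else var p
  | tru => tru
  | fls => fls
  | neg φ => neg (renForm V φ)
  | conj φ ψ => conj (renForm V φ) (renForm V ψ)
  | disj φ ψ => disj (renForm V φ) (renForm V ψ)

/-- `φ` is irrelevant to the atoms in `V`: it is equivalent to a formula not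
mentioning any atom of `V`. -/
def IR (φ : PropForm α) (V : List α) : Prop :=
  ∃ φ' : PropForm α, equivalent φ φ' ∧ ∀ p ∈ V, p ∉ vars φ'

end PropForm

/-- The formula corresponding to a literal. -/
def litToForm (l : α × Bool) : PropForm α :=
  if l.2 then PropForm.var l.1 else PropForm.neg (PropForm.var l.1)

/-- The disjunction of the literals of a clause. -/
noncomputable def clauseToForm (c : Clause α) : PropForm α :=
  c.toList.foldr (fun l φ => PropForm.disj (litToForm l) φ) PropForm.fls

/-- The conjunction of the clauses of a CNF theory. -/
noncomputable def cnfToForm (T : Finset (Clause α)) : PropForm α :=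
  T.toList.foldr (fun c φ => PropForm.conj (clauseToForm c) φ) PropForm.tru

/-- `φ` is Horn expressible. -/
def HornExpressible (φ : PropForm α) : Prop :=
  ∃ T : Finset (Clause α), (∀ c ∈ T, IsClause c) ∧ IsHornTheory T ∧
    PropForm.equivalent φ (cnfToForm T)

/-- `φ` is Krom expressible. -/
def KromExpressible (φ : PropForm α) : Prop :=
  ∃ T : Finset (Clause α), (∀ c ∈ T, IsClause c) ∧ IsKromTheory T ∧
    PropForm.equivalent φ (cnfToForm T)

/-- `φ` is renamable-Horn expressible. -/
def RenHornExpressible (φ : PropForm α) : Prop :=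
  ∃ T : Finset (Clause α), (∀ c ∈ T, IsClause c) ∧ IsRenHorn T ∧
    PropForm.equivalent φ (cnfToForm T)

/-- `φ` is q-Horn expressible. -/
def QHornExpressible (φ : PropForm α) : Prop :=
  ∃ T : Finset (Clause α), (∀ c ∈ T, IsClause c) ∧ IsQHorn T ∧
    PropForm.equivalent φ (cnfToForm T)

/-- A formula entails a clause. -/
def EntailsClause (φ : PropForm α) (c : Clause α) : Prop :=
  ∀ I : Set α, PropForm.Sat I φ → clauseSat I c

/-- A prime implicate of a formula. -/
def IsPrimeImplicate (φ : PropForm α) (c : Clause α) : Prop :=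
  IsClause c ∧ EntailsClause φ c ∧ ∀ c' ⊂ c, ¬ EntailsClause φ c'

/-- A term entails a formula. -/
def TermEntails (t : Clause α) (φ : PropForm α) : Prop :=
  ∀ I : Set α, termSat I t → PropForm.Sat I φ

/-- A prime implicant of a formula. -/
def IsPrimeImplicant (φ : PropForm α) (t : Clause α) : Prop :=
  IsClause t ∧ TermEntails t φ ∧ ∀ t' ⊂ t, ¬ TermEntails t' φ

/-- A CNF theory entails a clause. -/
def TheoryEntailsClause (T : Finset (Clause α)) (c : Clause α) : Prop :=
  ∀ I : Set α, cnfSat I T → clauseSat I c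

/-- A prime implicate of a CNF theory. -/
def IsPrimeImplicateT (T : Finset (Clause α)) (c : Clause α) : Prop :=
  IsClause c ∧ TheoryEntailsClause T c ∧ ∀ c' ⊂ c, ¬ TheoryEntailsClause T c'

/-- The set of prime implicates of a CNF theory, as a finite theory. -/
noncomputable def PI (T : Finset (Clause α)) : Finset (Clause α) :=
  (Set.toFinite {c : Clause α | IsPrimeImplicateT T c}).toFinset

/-- Strong unfolding of a CNF theory w.r.t. an atom `p`: keep the clauses not
mentioning `p`, and replace the clauses containing the positive literal `p` by all
their resolvents with clauses containing `¬p`; clauses containing `¬p` are removed. -/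
def unfold1 (T : Finset (Clause α)) (p : α) : Finset (Clause α) :=
  T.filter (fun c => (p, true) ∉ c ∧ (p, false) ∉ c) ∪
    ((T ×ˢ T).filter fun cc =>
        (p, true) ∈ cc.1 ∧ (p, false) ∈ cc.2 ∧ IsClause (res cc.1 cc.2 p)).image
      fun cc => res cc.1 cc.2 p

/-- Iterated strong unfolding w.r.t. a set of atoms (presented as a list):
`unfold(T, ∅) = T` and `unfold(T, V ∪ {p}) = unfold(unfold(T, p), V)`. -/
def unfoldList (T : Finset (Clause α)) : List α → Finset (Clause α)
  | [] => T
  | p :: V => unfoldList (unfold1 T p) V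

/-- `φ` is double Horn expressible: both `φ` and `¬φ` are Horn expressible. -/
def DoubleHornExpressible (φ : PropForm α) : Prop :=
  HornExpressible φ ∧ HornExpressible (PropForm.neg φ)

/-!
Forgetting a single atom `p` from a theory amounts to replacing the clauses that mention `p` by
their resolvents on `p`: if an interpretation `I` satisfies the result but neither `I ∪ {p}` nor
`I \ {p}` satisfies the theory, then a clause falsified by `I ∪ {p}` and one falsified by `I \ {p}`
have a resolvent falsified by `I`. Iterating over the atoms of `V` produces a theory whose models
are the models of `α` up to the values of the atoms in `V`, which makes it a uniform interpolant.
A class of clauses closed under resolution is preserved throughout; Horn clauses, Krom clauses and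
the clauses satisfying the QH-conditions for fixed `Q` and `H` form such classes, and so do their
preimages under a renaming, as renaming commutes with resolution. For double Horn theories, the
negation of the interpolant holds in `I` iff `¬α` holds in every interpretation agreeing with `I`
outside `V`; on a Horn theory equivalent to `¬α` this amounts to deleting all literals over `V`,
which keeps it Horn.
-/

section Semantics

variable {σ : Type*} {I J : Set σ}

theorem litSat_true (p : σ) : litSat I (p, true) ↔ p ∈ I := by simp [litSat]

theorem litSat_false (p : σ) : litSat I (p, false) ↔ p ∉ I := by simp [litSat]

theorem litSat_congr {l : σ × Bool} (h : l.1 ∈ I ↔ l.1 ∈ J) : litSat I l ↔ litSat J l := by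
  simp only [litSat, h]

theorem IsClause.subset {c d : Clause σ} (hd : IsClause d) (h : c ⊆ d) : IsClause c :=
  fun p hp => hd p ⟨h hp.1, h hp.2⟩

theorem clauseSat_of_not_isClause {c : Clause σ} (h : ¬ IsClause c) (I : Set σ) :
    clauseSat I c := by
  obtain ⟨p, hpos, hneg⟩ : ∃ p, (p, true) ∈ c ∧ (p, false) ∈ c := by
    simpa only [IsClause, not_forall, not_not] using h
  by_cases hp : p ∈ I
  · exact ⟨_, hpos, (litSat_true p).2 hp⟩
  · exact ⟨_, hneg, (litSat_false p).2 hp⟩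

open Classical in
theorem cnfSat_filter_isClause (I : Set σ) (T : Finset (Clause σ)) :
    cnfSat I (T.filter IsClause) ↔ cnfSat I T := by
  refine ⟨fun h c hc => ?_, fun h c hc => h c (Finset.filter_subset _ _ hc)⟩
  by_cases hcl : IsClause c
  · exact h c (Finset.mem_filter.2 ⟨hc, hcl⟩)
  · exact clauseSat_of_not_isClause hcl I

namespace PropForm

theorem sat_foldr_disj {ι : Type*} (f : ι → PropForm σ) (L : List ι) :
    Sat I (L.foldr (fun a φ => disj (f a) φ) fls) ↔ ∃ a ∈ L, Sat I (f a) := by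
  induction L with
  | nil => simp [Sat]
  | cons a L ih => simp [Sat, ih]

theorem sat_foldr_conj {ι : Type*} (f : ι → PropForm σ) (L : List ι) :
    Sat I (L.foldr (fun a φ => conj (f a) φ) tru) ↔ ∀ a ∈ L, Sat I (f a) := by
  induction L with
  | nil => simp [Sat]
  | cons a L ih => simp [Sat, ih]

theorem sat_litToForm (l : σ × Bool) : Sat I (litToForm l) ↔ litSat I l := by
  unfold litToForm litSat
  split <;> rfl

theorem sat_clauseToForm (c : Clause σ) : Sat I (clauseToForm c) ↔ clauseSat I c := by
  simp only [clauseToForm, sat_foldr_disj, Finset.mem_toList, sat_litToForm, clauseSat]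

theorem sat_cnfToForm (T : Finset (Clause σ)) : Sat I (cnfToForm T) ↔ cnfSat I T := by
  simp only [cnfToForm, sat_foldr_conj, Finset.mem_toList, sat_clauseToForm, cnfSat]

end PropForm

end Semantics

variable {σ : Type*} [DecidableEq σ]

section Atoms

theorem mem_varsC {c : Clause σ} {q : σ} : q ∈ varsC c ↔ ∃ b, (q, b) ∈ c := by
  simp [varsC]

theorem mem_posC {c : Clause σ} {q : σ} : q ∈ posC c ↔ (q, true) ∈ c := by
  simp [posC]

theorem mem_varsT {T : Finset (Clause σ)} {q : σ} : q ∈ varsT T ↔ ∃ c ∈ T, q ∈ varsC c :=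
  Finset.mem_sup

theorem varsT_mono {T T' : Finset (Clause σ)} (h : T ⊆ T') : varsT T ⊆ varsT T' :=
  Finset.sup_mono h

namespace PropForm

theorem mem_vars_foldr_disj {ι : Type*} {q : σ} (f : ι → PropForm σ) (L : List ι) :
    q ∈ vars (L.foldr (fun a φ => disj (f a) φ) fls) ↔ ∃ a ∈ L, q ∈ vars (f a) := by
  induction L with
  | nil => simp [vars]
  | cons a L ih => simp [vars, ih]

theorem mem_vars_foldr_conj {ι : Type*} {q : σ} (f : ι → PropForm σ) (L : List ι) :
    q ∈ vars (L.foldr (fun a φ => conj (f a) φ) tru) ↔ ∃ a ∈ L, q ∈ vars (f a) := by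
  induction L with
  | nil => simp [vars]
  | cons a L ih => simp [vars, ih]

theorem vars_litToForm (l : σ × Bool) : vars (litToForm l) = {l.1} := by
  unfold litToForm
  split <;> rfl

theorem vars_clauseToForm (c : Clause σ) : vars (clauseToForm c) = varsC c := by
  ext q
  simp only [clauseToForm, mem_vars_foldr_disj, Finset.mem_toList, vars_litToForm,
    Finset.mem_singleton, varsC, Finset.mem_image, eq_comm]

theorem vars_cnfToForm (T : Finset (Clause σ)) : vars (cnfToForm T) = varsT T := by
  ext q
  simp only [cnfToForm, mem_vars_foldr_conj, Finset.mem_toList, vars_clauseToForm, mem_varsT]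

theorem sat_congr {I J : Set σ} {φ : PropForm σ} (h : ∀ q ∈ vars φ, (q ∈ I ↔ q ∈ J)) :
    Sat I φ ↔ Sat J φ := by
  induction φ with
  | var p => exact h p (Finset.mem_singleton_self p)
  | tru => rfl
  | fls => rfl
  | neg φ ih => exact not_congr (ih h)
  | conj φ ψ ihφ ihψ =>
    exact and_congr (ihφ fun q hq => h q (Finset.mem_union_left _ hq))
      (ihψ fun q hq => h q (Finset.mem_union_right _ hq))
  | disj φ ψ ihφ ihψ =>
    exact or_congr (ihφ fun q hq => h q (Finset.mem_union_left _ hq))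
      (ihψ fun q hq => h q (Finset.mem_union_right _ hq))

end PropForm

end Atoms

section DropAtoms

/-- The clause obtained from `c` by deleting all literals over atoms of `V`. -/
def dropAtoms (V : Finset σ) (c : Clause σ) : Clause σ := c.filter fun l => l.1 ∉ V

theorem mem_dropAtoms {V : Finset σ} {c : Clause σ} {l : σ × Bool} :
    l ∈ dropAtoms V c ↔ l ∈ c ∧ l.1 ∉ V :=
  Finset.mem_filter

theorem dropAtoms_subset (V : Finset σ) (c : Clause σ) : dropAtoms V c ⊆ c :=
  Finset.filter_subset _ _

theorem dropAtoms_singleton_of_notMem {p : σ} {c : Clause σ} (hpos : (p, true) ∉ c)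
    (hneg : (p, false) ∉ c) : dropAtoms {p} c = c := by
  refine Finset.filter_true_of_mem ?_
  rintro ⟨q, b⟩ hl hlp
  obtain rfl : q = p := Finset.mem_singleton.1 hlp
  cases b
  exacts [hneg hl, hpos hl]

theorem card_dropAtoms_lt {V : Finset σ} {c : Clause σ} {l : σ × Bool} (hl : l ∈ c)
    (hV : l.1 ∈ V) : (dropAtoms V c).card < c.card :=
  Finset.card_lt_card (Finset.filter_ssubset.2 ⟨l, hl, not_not.2 hV⟩)

theorem HornClause.subset {c d : Clause σ} (hd : HornClause d) (h : c ⊆ d) : HornClause c :=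
  (Finset.card_le_card (Finset.image_subset_image (Finset.filter_subset_filter _ h))).trans hd

theorem varsC_dropAtoms (V : Finset σ) (c : Clause σ) : varsC (dropAtoms V c) = varsC c \ V := by
  ext q
  simp [mem_varsC, mem_dropAtoms]

theorem posC_dropAtoms (V : Finset σ) (c : Clause σ) : posC (dropAtoms V c) = posC c \ V := by
  ext q
  simp [mem_posC, mem_dropAtoms]

end DropAtoms

section AgreeOff

/-- The interpretations `J` and `I` differ at most on the atoms of `V`. -/
def AgreeOff {σ : Type*} (V : Finset σ) (J I : Set σ) : Prop := ∀ q ∉ V, (q ∈ J ↔ q ∈ I)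

theorem AgreeOff.refl {σ : Type*} (V : Finset σ) (I : Set σ) : AgreeOff V I I :=
  fun _ _ => Iff.rfl

theorem agreeOff_empty {σ : Type*} {I J : Set σ} : AgreeOff ∅ J I ↔ J = I := by
  simp [AgreeOff, Set.ext_iff]

theorem agreeOff_union {U V : Finset σ} {I K : Set σ} :
    AgreeOff (U ∪ V) K I ↔ ∃ J, AgreeOff V J I ∧ AgreeOff U K J := by
  constructor
  · intro h
    refine ⟨{q | if q ∈ V then q ∈ K else q ∈ I}, fun q hV => by simp [hV], fun q hU => ?_⟩
    by_cases hV : q ∈ V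
    · simp [hV]
    · simpa [hV] using h q (by simp [hU, hV])
  · rintro ⟨J, hJI, hKJ⟩ q hq
    rw [Finset.mem_union, not_or] at hq
    exact (hKJ q hq.1).trans (hJI q hq.2)

theorem agreeOff_singleton {σ : Type*} {p : σ} {I J : Set σ} :
    AgreeOff {p} J I ↔ J = insert p I ∨ J = I \ {p} := by
  constructor
  · intro h
    have h' : ∀ q, q ≠ p → (q ∈ J ↔ q ∈ I) := fun q hq => h q (by simpa using hq)
    by_cases hp : p ∈ J
    · refine Or.inl (Set.ext fun q => ?_)
      rcases eq_or_ne q p with rfl | hq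
      · simp [hp]
      · simp [h' q hq, hq]
    · refine Or.inr (Set.ext fun q => ?_)
      rcases eq_or_ne q p with rfl | hq
      · simp [hp]
      · simp [h' q hq, hq]
  · rintro (rfl | rfl) q hq <;> rw [Finset.mem_singleton] at hq <;> simp [hq]

theorem AgreeOff.clauseSat_iff {V : Finset σ} {I J : Set σ} (h : AgreeOff V J I) (c : Clause σ) :
    clauseSat J c ↔ (∃ l ∈ c, l.1 ∈ V ∧ litSat J l) ∨ clauseSat I (dropAtoms V c) := by
  constructor
  · rintro ⟨l, hl, hsat⟩
    by_cases hV : l.1 ∈ V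
    · exact Or.inl ⟨l, hl, hV, hsat⟩
    · exact Or.inr ⟨l, mem_dropAtoms.2 ⟨hl, hV⟩, (litSat_congr (h _ hV)).1 hsat⟩
  · rintro (⟨l, hl, -, hsat⟩ | ⟨l, hl, hsat⟩)
    · exact ⟨l, hl, hsat⟩
    · obtain ⟨hl, hV⟩ := mem_dropAtoms.1 hl
      exact ⟨l, hl, (litSat_congr (h _ hV)).2 hsat⟩

theorem clauseSat_insert (I : Set σ) (p : σ) (c : Clause σ) :
    clauseSat (insert p I) c ↔ (p, true) ∈ c ∨ clauseSat I (dropAtoms {p} c) := by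
  have hp : (∃ l ∈ c, l.1 ∈ ({p} : Finset σ) ∧ litSat (insert p I) l) ↔ (p, true) ∈ c := by
    simp only [Prod.exists, Bool.exists_bool, Finset.mem_singleton, litSat_true, litSat_false]
    grind
  rw [(agreeOff_singleton.2 (Or.inl rfl)).clauseSat_iff, hp]

theorem clauseSat_diff_singleton (I : Set σ) (p : σ) (c : Clause σ) :
    clauseSat (I \ {p}) c ↔ (p, false) ∈ c ∨ clauseSat I (dropAtoms {p} c) := by
  have hp : (∃ l ∈ c, l.1 ∈ ({p} : Finset σ) ∧ litSat (I \ {p}) l) ↔ (p, false) ∈ c := by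
    simp only [Prod.exists, Bool.exists_bool, Finset.mem_singleton, litSat_true, litSat_false]
    grind
  rw [(agreeOff_singleton.2 (Or.inr rfl)).clauseSat_iff, hp]

theorem IsClause.clauseSat_dropAtoms_iff {c : Clause σ} (hc : IsClause c) {V : Finset σ}
    {I : Set σ} : clauseSat I (dropAtoms V c) ↔ ∀ J, AgreeOff V J I → clauseSat J c := by
  refine ⟨fun h J hJ => (hJ.clauseSat_iff c).2 (Or.inr h), fun h => ?_⟩
  -- This interpretation falsifies every literal of `c` over `V`.
  let J : Set σ := {q | if q ∈ V then (q, false) ∈ c else q ∈ I}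
  have hJ : AgreeOff V J I := fun q hV => by simp [J, hV]
  refine ((hJ.clauseSat_iff c).1 (h J hJ)).resolve_left ?_
  rintro ⟨⟨q, b⟩, hl, hV, hsat⟩
  have hqJ : q ∈ J ↔ (q, false) ∈ c := by simp only [J, Set.mem_ofPred_eq, if_pos hV]
  cases b
  · exact (litSat_false q).1 hsat (hqJ.2 hl)
  · exact hc q ⟨hl, hqJ.1 ((litSat_true q).1 hsat)⟩

end AgreeOff

section Resolution

theorem res_eq_union_dropAtoms (c c' : Clause σ) (p : σ) :
    res c c' p = dropAtoms {p} c ∪ dropAtoms {p} c' := by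
  ext ⟨q, b⟩
  cases b <;> simp [res, mem_dropAtoms, or_and_right]

theorem mem_res {c c' : Clause σ} {p : σ} {l : σ × Bool} :
    l ∈ res c c' p ↔ (l ∈ c ∨ l ∈ c') ∧ l.1 ≠ p := by
  simp only [res_eq_union_dropAtoms, Finset.mem_union, mem_dropAtoms, Finset.mem_singleton,
    or_and_right, ne_eq]

theorem res_comm (c c' : Clause σ) (p : σ) : res c c' p = res c' c p := by
  rw [res, res, Finset.union_comm]

theorem varsC_res (c c' : Clause σ) (p : σ) :
    varsC (res c c' p) = (varsC c ∪ varsC c') \ {p} := by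
  rw [res_eq_union_dropAtoms, varsC, Finset.image_union, ← varsC, ← varsC, varsC_dropAtoms,
    varsC_dropAtoms, Finset.union_sdiff_distrib]

theorem posC_res (c c' : Clause σ) (p : σ) :
    posC (res c c' p) = (posC c ∪ posC c') \ {p} := by
  rw [res_eq_union_dropAtoms, posC, Finset.filter_union, Finset.image_union, ← posC, ← posC,
    posC_dropAtoms, posC_dropAtoms, Finset.union_sdiff_distrib]

theorem clauseSat_res {I : Set σ} {c c' : Clause σ} {p : σ} :
    clauseSat I (res c c' p) ↔
      clauseSat I (dropAtoms {p} c) ∨ clauseSat I (dropAtoms {p} c') := by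
  simp only [res_eq_union_dropAtoms, clauseSat, Finset.mem_union, or_and_right, exists_or]

/-- Davis–Putnam elimination of the atom `p`: the clauses that mention `p` are replaced by their
resolvents on `p`. As `res` deletes both literals over `p`, resolving a clause that contains both
would be unsound; such clauses are tautologies and are discarded instead. -/
def eliminateAtom (T : Finset (Clause σ)) (p : σ) : Finset (Clause σ) :=
  T.filter (fun c => (p, true) ∉ c ∧ (p, false) ∉ c) ∪
    Finset.image₂ (fun c c' => res c c' p)
      (T.filter fun c => (p, true) ∈ c ∧ (p, false) ∉ c)
      (T.filter fun c => (p, false) ∈ c ∧ (p, true) ∉ c)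

theorem forall_mem_eliminateAtom {T : Finset (Clause σ)} {p : σ} {P : Clause σ → Prop} :
    (∀ d ∈ eliminateAtom T p, P d) ↔
      (∀ c ∈ T, (p, true) ∉ c → (p, false) ∉ c → P c) ∧
        ∀ c ∈ T, (p, true) ∈ c → (p, false) ∉ c →
          ∀ c' ∈ T, (p, false) ∈ c' → (p, true) ∉ c' → P (res c c' p) := by
  simp only [eliminateAtom, Finset.forall_mem_union, Finset.forall_mem_image₂, Finset.mem_filter,
    and_imp]

theorem cnfSat_eliminateAtom {I : Set σ} {T : Finset (Clause σ)} {p : σ} :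
    cnfSat I (eliminateAtom T p) ↔ cnfSat (insert p I) T ∨ cnfSat (I \ {p}) T := by
  simp only [cnfSat, forall_mem_eliminateAtom, clauseSat_res, clauseSat_insert,
    clauseSat_diff_singleton]
  constructor
  · rintro ⟨hkeep, hres⟩
    by_contra! ⟨⟨c', hc', hpos', hfalse'⟩, c, hc, hneg, hfalse⟩
    have hneg' : (p, false) ∈ c' := by
      by_contra hneg'
      rw [dropAtoms_singleton_of_notMem hpos' hneg'] at hfalse'
      exact hfalse' (hkeep c' hc' hpos' hneg')
    have hpos : (p, true) ∈ c := by
      by_contra hpos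
      rw [dropAtoms_singleton_of_notMem hpos hneg] at hfalse
      exact hfalse (hkeep c hc hpos hneg)
    exact (hres c hc hpos hneg c' hc' hneg' hpos').elim hfalse hfalse'
  · intro h
    have hkeep : ∀ c ∈ T, (p, true) ∉ c → (p, false) ∉ c → clauseSat I c := by
      intro c hc hpos hneg
      rw [← dropAtoms_singleton_of_notMem hpos hneg]
      exact h.elim (fun h => (h c hc).resolve_left hpos) (fun h => (h c hc).resolve_left hneg)
    exact ⟨hkeep, fun c hc _ hneg c' hc' _ hpos' =>
      h.symm.imp (fun h => (h c hc).resolve_left hneg) (fun h => (h c' hc').resolve_left hpos')⟩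

theorem varsT_eliminateAtom_subset (T : Finset (Clause σ)) (p : σ) :
    varsT (eliminateAtom T p) ⊆ varsT T \ {p} := by
  have hT : ∀ c ∈ T, varsC c ⊆ varsT T := fun c hc => Finset.le_sup hc
  refine Finset.sup_le (forall_mem_eliminateAtom.2 ⟨fun c hc hpos hneg => ?_, ?_⟩)
  · rw [← dropAtoms_singleton_of_notMem hpos hneg, varsC_dropAtoms]
    exact Finset.sdiff_subset_sdiff (hT c hc) subset_rfl
  · intro c hc _ _ c' hc' _ _
    rw [varsC_res]
    exact Finset.sdiff_subset_sdiff (Finset.union_subset (hT c hc) (hT c' hc')) subset_rfl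

/-- A class `P` of clauses containing every resolvent of two of its members. -/
def ResolutionClosed (P : Clause σ → Prop) : Prop :=
  ∀ c c' p, (p, true) ∈ c → (p, false) ∈ c' → P c → P c' → P (res c c' p)

theorem ResolutionClosed.of_mem_eliminateAtom {P : Clause σ → Prop} (hP : ResolutionClosed P)
    {T : Finset (Clause σ)} (hT : ∀ c ∈ T, P c) (p : σ) : ∀ d ∈ eliminateAtom T p, P d :=
  forall_mem_eliminateAtom.2 ⟨fun c hc _ _ => hT c hc,
    fun c hc hpos _ c' hc' hneg' _ => hP c c' p hpos hneg' (hT c hc) (hT c' hc')⟩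

end Resolution

section Forgetting

/-- `T'` results from forgetting the atoms of `V` in `T`: it is a theory over the remaining atoms
whose models are the models of `T` up to the values of the atoms of `V`. -/
structure IsForgetting (V : Finset σ) (T T' : Finset (Clause σ)) : Prop where
  varsT_subset : varsT T' ⊆ varsT T \ V
  cnfSat_iff : ∀ I, cnfSat I T' ↔ ∃ J, AgreeOff V J I ∧ cnfSat J T

theorem isForgetting_empty (T : Finset (Clause σ)) : IsForgetting ∅ T T where
  varsT_subset := by rw [Finset.sdiff_empty]
  cnfSat_iff I := by simp only [agreeOff_empty, exists_eq_left]

theorem isForgetting_eliminateAtom (T : Finset (Clause σ)) (p : σ) :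
    IsForgetting {p} T (eliminateAtom T p) where
  varsT_subset := varsT_eliminateAtom_subset T p
  cnfSat_iff I := by
    simp only [cnfSat_eliminateAtom, agreeOff_singleton, or_and_right, exists_or, exists_eq_left]

theorem IsForgetting.trans {U V : Finset σ} {T₁ T₂ T₃ : Finset (Clause σ)}
    (h₁₂ : IsForgetting U T₁ T₂) (h₂₃ : IsForgetting V T₂ T₃) : IsForgetting (U ∪ V) T₁ T₃ where
  varsT_subset := by
    rw [← Finset.sup_eq_union, ← sdiff_sdiff_left]
    exact h₂₃.varsT_subset.trans (Finset.sdiff_subset_sdiff h₁₂.varsT_subset subset_rfl)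
  cnfSat_iff I := by
    simp only [h₂₃.cnfSat_iff, h₁₂.cnfSat_iff, agreeOff_union]
    grind

open Classical in
theorem IsForgetting.filter_isClause {V : Finset σ} {T T' : Finset (Clause σ)}
    (h : IsForgetting V T T') : IsForgetting V T (T'.filter IsClause) where
  varsT_subset := (varsT_mono (Finset.filter_subset _ _)).trans h.varsT_subset
  cnfSat_iff I := (cnfSat_filter_isClause I T').trans (h.cnfSat_iff I)

theorem ResolutionClosed.exists_isForgetting {P : Clause σ → Prop} (hP : ResolutionClosed P)
    {T : Finset (Clause σ)} (hT : ∀ c ∈ T, P c) (V : Finset σ) :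
    ∃ T', (∀ c ∈ T', IsClause c) ∧ (∀ c ∈ T', P c) ∧ IsForgetting V T T' := by
  classical
  suffices ∃ T', (∀ c ∈ T', P c) ∧ IsForgetting V T T' by
    obtain ⟨T', hPT', hT'⟩ := this
    exact ⟨T'.filter IsClause, fun c hc => (Finset.mem_filter.1 hc).2,
      fun c hc => hPT' c (Finset.mem_filter.1 hc).1, hT'.filter_isClause⟩
  induction V using Finset.induction_on with
  | empty => exact ⟨T, hT, isForgetting_empty T⟩
  | insert p V _ ih =>
    obtain ⟨T', hPT', hT'⟩ := ih
    refine ⟨eliminateAtom T' p, hP.of_mem_eliminateAtom hPT' p, ?_⟩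
    rw [Finset.insert_eq, Finset.union_comm]
    exact hT'.trans (isForgetting_eliminateAtom T' p)

/-- `γ` is a uniform interpolant of the theory `T` with respect to the atoms of `V`: it is built
from the other atoms of `T` and has the same consequences as `T` among the formulas without atoms
of `V`. -/
def IsUniformInterpolant (V : Finset σ) (T : Finset (Clause σ)) (γ : PropForm σ) : Prop :=
  γ.vars ⊆ varsT T \ V ∧
    ∀ β : PropForm σ, β.vars ∩ V = ∅ → ((cnfToForm T).entails β ↔ γ.entails β)

theorem IsForgetting.isUniformInterpolant {V : Finset σ} {T T' : Finset (Clause σ)}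
    (h : IsForgetting V T T') : IsUniformInterpolant V T (cnfToForm T') := by
  refine ⟨(PropForm.vars_cnfToForm T').trans_subset h.varsT_subset, fun β hβ => ?_⟩
  have hβ_congr : ∀ I J, AgreeOff V J I → (β.Sat J ↔ β.Sat I) := fun I J hJ =>
    PropForm.sat_congr fun q hq =>
      hJ q (Finset.disjoint_left.1 (Finset.disjoint_iff_inter_eq_empty.2 hβ) hq)
  simp only [PropForm.entails, PropForm.sat_cnfToForm, h.cnfSat_iff]
  constructor
  · rintro hTβ I ⟨J, hJ, hsat⟩
    exact (hβ_congr I J hJ).1 (hTβ J hsat)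
  · exact fun hT'β I hsat => hT'β I ⟨I, AgreeOff.refl V I, hsat⟩

end Forgetting

section Horn

theorem resolutionClosed_hornClause : ResolutionClosed (σ := σ) HornClause := by
  intro c c' p hpos _ hc hc'
  have hpc : {p} = posC c :=
    Finset.eq_of_subset_of_card_le (Finset.singleton_subset_iff.2 (mem_posC.2 hpos)) hc
  refine (Finset.card_le_card ?_).trans hc'
  rw [posC_res, ← hpc, Finset.union_sdiff_left]
  exact Finset.sdiff_subset

theorem IsHornTheory.exists_uniformInterpolant {T : Finset (Clause σ)} (hT : IsHornTheory T)
    (V : Finset σ) : ∃ γ, HornExpressible γ ∧ IsUniformInterpolant V T γ := by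
  obtain ⟨T', hcl, hhorn, hforget⟩ := resolutionClosed_hornClause.exists_isForgetting hT V
  exact ⟨cnfToForm T', ⟨T', hcl, hhorn, fun _ => Iff.rfl⟩, hforget.isUniformInterpolant⟩

theorem HornExpressible.neg_of_isForgetting {V : Finset σ} {T T' : Finset (Clause σ)}
    (hneg : HornExpressible (.neg (cnfToForm T))) (h : IsForgetting V T T') :
    HornExpressible (.neg (cnfToForm T')) := by
  obtain ⟨S, hcl, hhorn, hequiv⟩ := hneg
  have hTS : ∀ J, ¬ cnfSat J T ↔ cnfSat J S := by
    simpa only [PropForm.equivalent, PropForm.Sat, PropForm.sat_cnfToForm] using hequiv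
  refine ⟨S.image (dropAtoms V), Finset.forall_mem_image.2 fun c hc =>
    (hcl c hc).subset (dropAtoms_subset V c), Finset.forall_mem_image.2 fun c hc =>
    HornClause.subset (hhorn c hc) (dropAtoms_subset V c), fun I => ?_⟩
  calc (PropForm.neg (cnfToForm T')).Sat I
      ↔ ∀ J, AgreeOff V J I → cnfSat J S := by
        simp only [PropForm.Sat, PropForm.sat_cnfToForm, h.cnfSat_iff, not_exists, not_and, hTS]
    _ ↔ ∀ c ∈ S, ∀ J, AgreeOff V J I → clauseSat J c :=
        ⟨fun h c hc J hJ => h J hJ c hc, fun h J hJ c hc => h c hc J hJ⟩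
    _ ↔ ∀ c ∈ S, clauseSat I (dropAtoms V c) :=
        forall₂_congr fun c hc => (hcl c hc).clauseSat_dropAtoms_iff.symm
    _ ↔ (cnfToForm (S.image (dropAtoms V))).Sat I := by
        simp only [PropForm.sat_cnfToForm, cnfSat, Finset.forall_mem_image]

theorem IsHornTheory.exists_doubleHorn_uniformInterpolant {T : Finset (Clause σ)}
    (hT : IsHornTheory T) (hneg : HornExpressible (.neg (cnfToForm T))) (V : Finset σ) :
    ∃ γ, DoubleHornExpressible γ ∧ IsUniformInterpolant V T γ := by
  obtain ⟨T', hcl, hhorn, hforget⟩ := resolutionClosed_hornClause.exists_isForgetting hT V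
  exact ⟨cnfToForm T', ⟨⟨T', hcl, hhorn, fun _ => Iff.rfl⟩, hneg.neg_of_isForgetting hforget⟩,
    hforget.isUniformInterpolant⟩

end Horn

section Krom

theorem card_res_add_two_le {c c' : Clause σ} {p : σ} (hpos : (p, true) ∈ c)
    (hneg : (p, false) ∈ c') : (res c c' p).card + 2 ≤ c.card + c'.card := by
  have hc : (dropAtoms {p} c).card < c.card :=
    card_dropAtoms_lt hpos (Finset.mem_singleton_self p)
  have hc' : (dropAtoms {p} c').card < c'.card :=
    card_dropAtoms_lt hneg (Finset.mem_singleton_self p)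
  have hunion := Finset.card_union_le (dropAtoms {p} c) (dropAtoms {p} c')
  rw [res_eq_union_dropAtoms]
  lia

theorem resolutionClosed_card_le_two : ResolutionClosed fun c : Clause σ => c.card ≤ 2 := by
  intro c c' p hpos hneg hc hc'
  have := card_res_add_two_le hpos hneg
  lia

theorem IsKromTheory.exists_uniformInterpolant {T : Finset (Clause σ)} (hT : IsKromTheory T)
    (V : Finset σ) : ∃ γ, KromExpressible γ ∧ IsUniformInterpolant V T γ := by
  obtain ⟨T', hcl, hkrom, hforget⟩ := resolutionClosed_card_le_two.exists_isForgetting hT V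
  exact ⟨cnfToForm T', ⟨T', hcl, hkrom, fun _ => Iff.rfl⟩, hforget.isUniformInterpolant⟩

end Krom

section Renaming

theorem renLit_fst (W : Finset σ) (l : σ × Bool) : (renLit W l).1 = l.1 := by
  unfold renLit
  split <;> rfl

theorem renLit_involutive (W : Finset σ) : Function.Involutive (renLit W) := by
  intro l
  by_cases h : l.1 ∈ W <;> simp [renLit, h]

theorem mem_renClause {W : Finset σ} {c : Clause σ} {l : σ × Bool} :
    l ∈ renClause W c ↔ renLit W l ∈ c := by
  rw [renClause, Finset.mem_image]
  exact ⟨by rintro ⟨l, hl, rfl⟩; rwa [renLit_involutive], fun h => ⟨_, h, renLit_involutive W l⟩⟩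

theorem renClause_res (W : Finset σ) (c c' : Clause σ) (p : σ) :
    renClause W (res c c' p) = res (renClause W c) (renClause W c') p := by
  ext l
  simp only [mem_renClause, mem_res, renLit_fst]

theorem ResolutionClosed.comp_renClause {P : Clause σ → Prop} (hP : ResolutionClosed P)
    (W : Finset σ) : ResolutionClosed fun c => P (renClause W c) := by
  intro c c' p hpos hneg hc hc'
  rw [renClause_res]
  by_cases hp : p ∈ W
  · rw [res_comm]
    exact hP _ _ p (by simpa [mem_renClause, renLit, hp]) (by simpa [mem_renClause, renLit, hp])
      hc' hc
  · exact hP _ _ p (by simpa [mem_renClause, renLit, hp]) (by simpa [mem_renClause, renLit, hp])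
      hc hc'

theorem isRenHorn_iff {T : Finset (Clause σ)} :
    IsRenHorn T ↔ ∃ W, ∀ c ∈ T, HornClause (renClause W c) :=
  exists_congr fun _ => Finset.forall_mem_image

theorem IsRenHorn.exists_uniformInterpolant {T : Finset (Clause σ)} (hT : IsRenHorn T)
    (V : Finset σ) : ∃ γ, RenHornExpressible γ ∧ IsUniformInterpolant V T γ := by
  obtain ⟨W, hW⟩ := isRenHorn_iff.1 hT
  obtain ⟨T', hcl, hhorn, hforget⟩ :=
    (resolutionClosed_hornClause.comp_renClause W).exists_isForgetting hW V
  exact ⟨cnfToForm T', ⟨T', hcl, isRenHorn_iff.2 ⟨W, hhorn⟩, fun _ => Iff.rfl⟩,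
    hforget.isUniformInterpolant⟩

end Renaming

section QHorn

/-- The clauses over `Q ∪ H` that satisfy the QH-conditions. Asking only that `Q ∪ H` contain the
atoms of a clause, rather than be the set of atoms of the theory, makes this a property of single
clauses. -/
def QHClause (Q H : Finset σ) (c : Clause σ) : Prop := varsC c ⊆ Q ∪ H ∧ QHcond Q H c

theorem QHcond.of_subset {Q H Q' H' : Finset σ} {c d : Clause σ} (hc : QHcond Q H c)
    (hQ : varsC d ∩ Q' ⊆ varsC c ∩ Q) (hH : posC d ∩ H' ⊆ posC c ∩ H) : QHcond Q' H' d := by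
  obtain ⟨hcQ, hcH, hexcl⟩ := hc
  have hHcard := Finset.card_le_card hH
  refine ⟨(Finset.card_le_card hQ).trans hcQ, hHcard.trans hcH, fun hd => ?_⟩
  exact Finset.subset_empty.1 (hexcl (by lia) ▸ hQ)

theorem QHcond.posC_inter_eq_empty {Q H : Finset σ} {c : Clause σ} {p : σ} (hc : QHcond Q H c)
    (hpc : p ∈ varsC c) (hpQ : p ∈ Q) : posC c ∩ H = ∅ := by
  obtain ⟨-, hcH, hexcl⟩ := hc
  have hne : (posC c ∩ H).card ≠ 1 := fun h =>
    Finset.notMem_empty p (hexcl h ▸ Finset.mem_inter.2 ⟨hpc, hpQ⟩)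
  exact Finset.card_eq_zero.1 (by lia)

theorem QHcond.res_of_mem_H {Q H : Finset σ} {c c' : Clause σ} {p : σ} (hc : QHcond Q H c)
    (hc' : QHcond Q H c') (hpos : (p, true) ∈ c) (hpH : p ∈ H) : QHcond Q H (res c c' p) := by
  obtain ⟨-, hcH, hexcl⟩ := hc
  have hposC : {p} = posC c ∩ H := Finset.eq_of_subset_of_card_le
    (Finset.singleton_subset_iff.2 (Finset.mem_inter.2 ⟨mem_posC.2 hpos, hpH⟩)) hcH
  have hvarsC : varsC c ∩ Q = ∅ := hexcl (hposC ▸ Finset.card_singleton p)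
  refine hc'.of_subset ?_ ?_
  · rw [varsC_res]
    refine (Finset.inter_subset_inter_right Finset.sdiff_subset).trans ?_
    rw [Finset.union_inter_distrib_right, hvarsC, Finset.empty_union]
  · rw [posC_res]
    grind

theorem QHcond.res_of_mem_Q {Q H : Finset σ} {c c' : Clause σ} {p : σ} (hc : QHcond Q H c)
    (hc' : QHcond Q H c') (hpc : p ∈ varsC c) (hpc' : p ∈ varsC c') (hpQ : p ∈ Q) :
    QHcond Q H (res c c' p) := by
  have hposC : posC (res c c' p) ∩ H = ∅ := by
    have hpos := hc.posC_inter_eq_empty hpc hpQ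
    have hpos' := hc'.posC_inter_eq_empty hpc' hpQ
    rw [posC_res]
    grind
  have hvarsC : varsC (res c c' p) ∩ Q = (varsC c ∩ Q).erase p ∪ (varsC c' ∩ Q).erase p := by
    rw [varsC_res]
    grind
  have hcard : (varsC (res c c' p) ∩ Q).card ≤ 2 := by
    have hunion := Finset.card_union_le ((varsC c ∩ Q).erase p) ((varsC c' ∩ Q).erase p)
    rw [← hvarsC, Finset.card_erase_of_mem (Finset.mem_inter.2 ⟨hpc, hpQ⟩),
      Finset.card_erase_of_mem (Finset.mem_inter.2 ⟨hpc', hpQ⟩)] at hunion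
    have := hc.1
    have := hc'.1
    lia
  refine ⟨hcard, ?_⟩
  simp [hposC]

theorem resolutionClosed_qhClause (Q H : Finset σ) : ResolutionClosed (QHClause Q H) := by
  rintro c c' p hpos hneg ⟨hcQH, hc⟩ ⟨hcQH', hc'⟩
  constructor
  · rw [varsC_res]
    exact Finset.sdiff_subset.trans (Finset.union_subset hcQH hcQH')
  · have hpc : p ∈ varsC c := mem_varsC.2 ⟨true, hpos⟩
    rcases Finset.mem_union.1 (hcQH hpc) with hp | hp
    · exact hc.res_of_mem_Q hc' hpc (mem_varsC.2 ⟨false, hneg⟩) hp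
    · exact hc.res_of_mem_H hc' hpos hp

theorem hasQHPartition_iff {T : Finset (Clause σ)} :
    HasQHPartition T ↔ ∃ Q H, Disjoint Q H ∧ ∀ c ∈ T, QHClause Q H c := by
  constructor
  · rintro ⟨Q, H, hdisj, hunion, hQH⟩
    exact ⟨Q, H, Finset.disjoint_iff_inter_eq_empty.2 hdisj, fun c hc =>
      ⟨hunion ▸ Finset.le_sup hc, hQH c hc⟩⟩
  · rintro ⟨Q, H, hdisj, hQH⟩
    have hcover : varsT T ⊆ Q ∪ H := Finset.sup_le fun c hc => (hQH c hc).1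
    refine ⟨Q ∩ varsT T, H ∩ varsT T, ?_, ?_, fun c hc => (hQH c hc).2.of_subset ?_ ?_⟩
    · exact Finset.disjoint_iff_inter_eq_empty.1
        (hdisj.mono Finset.inter_subset_left Finset.inter_subset_left)
    · rw [← Finset.union_inter_distrib_right, Finset.inter_eq_right.2 hcover]
    · exact Finset.inter_subset_inter_left Finset.inter_subset_left
    · exact Finset.inter_subset_inter_left Finset.inter_subset_left

theorem isQHorn_iff {T : Finset (Clause σ)} :
    IsQHorn T ↔ ∃ W Q H, Disjoint Q H ∧ ∀ c ∈ T, QHClause Q H (renClause W c) := by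
  simp only [IsQHorn, hasQHPartition_iff, renTheory, Finset.forall_mem_image]

theorem IsQHorn.exists_uniformInterpolant {T : Finset (Clause σ)} (hT : IsQHorn T)
    (V : Finset σ) : ∃ γ, QHornExpressible γ ∧ IsUniformInterpolant V T γ := by
  obtain ⟨W, Q, H, hdisj, hQH⟩ := isQHorn_iff.1 hT
  obtain ⟨T', hcl, hQH', hforget⟩ :=
    ((resolutionClosed_qhClause Q H).comp_renClause W).exists_isForgetting hQH V
  exact ⟨cnfToForm T', ⟨T', hcl, isQHorn_iff.2 ⟨W, Q, H, hdisj, hQH'⟩, fun _ => Iff.rfl⟩,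
    hforget.isUniformInterpolant⟩

end QHorn

theorem uniform_interpolation_fragments_general (T : Finset (Clause σ)) (V : Finset σ) :
    (IsHornTheory T → ∃ γ, HornExpressible γ ∧ IsUniformInterpolant V T γ) ∧
    (IsKromTheory T → ∃ γ, KromExpressible γ ∧ IsUniformInterpolant V T γ) ∧
    (IsHornTheory T → HornExpressible (.neg (cnfToForm T)) →
      ∃ γ, DoubleHornExpressible γ ∧ IsUniformInterpolant V T γ) ∧
    (IsRenHorn T → ∃ γ, RenHornExpressible γ ∧ IsUniformInterpolant V T γ) ∧
    (IsQHorn T → ∃ γ, QHornExpressible γ ∧ IsUniformInterpolant V T γ) :=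
  ⟨fun h => h.exists_uniformInterpolant V, fun h => h.exists_uniformInterpolant V,
    fun h hneg => h.exists_doubleHorn_uniformInterpolant hneg V,
    fun h => h.exists_uniformInterpolant V, fun h => h.exists_uniformInterpolant V⟩

/-- The Horn, Krom, double Horn, renamable Horn and q-Horn fragments
have the uniform interpolation property: for every theory `α` in the fragment and
every set `V` of atoms, there is a formula `γ` expressible in the same fragment
with `Var(γ) ⊆ Var(α) \ V` such that for every formula `β` with `Var(β) ∩ V = ∅`,
`α ⊨ β` iff `γ ⊨ β`. -/
theorem uniform_interpolation_fragments :
    (∀ T : Finset (Clause α), (∀ c ∈ T, IsClause c) → IsHornTheory T →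
      ∀ V : Finset α, ∃ γ : PropForm α, HornExpressible γ ∧
        PropForm.vars γ ⊆ varsT T \ V ∧
        ∀ β : PropForm α, PropForm.vars β ∩ V = ∅ →
          (PropForm.entails (cnfToForm T) β ↔ PropForm.entails γ β)) ∧
    (∀ T : Finset (Clause α), (∀ c ∈ T, IsClause c) → IsKromTheory T →
      ∀ V : Finset α, ∃ γ : PropForm α, KromExpressible γ ∧
        PropForm.vars γ ⊆ varsT T \ V ∧
        ∀ β : PropForm α, PropForm.vars β ∩ V = ∅ →
          (PropForm.entails (cnfToForm T) β ↔ PropForm.entails γ β)) ∧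
    (∀ T : Finset (Clause α), (∀ c ∈ T, IsClause c) → IsHornTheory T →
      HornExpressible (PropForm.neg (cnfToForm T)) →
      ∀ V : Finset α, ∃ γ : PropForm α, DoubleHornExpressible γ ∧
        PropForm.vars γ ⊆ varsT T \ V ∧
        ∀ β : PropForm α, PropForm.vars β ∩ V = ∅ →
          (PropForm.entails (cnfToForm T) β ↔ PropForm.entails γ β)) ∧
    (∀ T : Finset (Clause α), (∀ c ∈ T, IsClause c) → IsRenHorn T →
      ∀ V : Finset α, ∃ γ : PropForm α, RenHornExpressible γ ∧
        PropForm.vars γ ⊆ varsT T \ V ∧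
        ∀ β : PropForm α, PropForm.vars β ∩ V = ∅ →
          (PropForm.entails (cnfToForm T) β ↔ PropForm.entails γ β)) ∧
    (∀ T : Finset (Clause α), (∀ c ∈ T, IsClause c) → IsQHorn T →
      ∀ V : Finset α, ∃ γ : PropForm α, QHornExpressible γ ∧
        PropForm.vars γ ⊆ varsT T \ V ∧
        ∀ β : PropForm α, PropForm.vars β ∩ V = ∅ →
          (PropForm.entails (cnfToForm T) β ↔ PropForm.entails γ β)) :=
  have general := uniform_interpolation_fragments_general (σ := α)
  ⟨fun T _ h V => (general T V).1 h, fun T _ h V => (general T V).2.1 h,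
    fun T _ h hneg V => (general T V).2.2.1 h hneg, fun T _ h V => (general T V).2.2.2.1 h,
    fun T _ h V => (general T V).2.2.2.2 h⟩
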